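/- arXiv:1801.05121 — 2 statements merged into one kernel-verified Lean document; each statement's English description precedes it below -/
import Mathlib

section
/- Let Q be a generator-stationary random element of S. Suppose max(β/√n, 1/n) < 1. Then for every integer i ≥ 3, every κ > β and every κ̃ ∈ (max(β/√n, 1/n), 1): E[Q_i] ≤ (1/(β(1 − κ̃)))·(12 + 6κ̃/(κ̃ − β/√n))·(1/(κ̃ − 1/n))·(2κ + (1/β)·(12 + 6κ/(κ − β))). -/
open MeasureTheory

/-- Membership in the state space `S`: coordinates are at most `n`, the sequence is
non-increasing, and only finitely many coordinates are non-zero (finite total mass).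
Here `q i` represents the paper's `Q_{i+1}`. -/
def InS (n : ℕ) (q : ℕ → ℕ) : Prop :=
  (∀ i, q i ≤ n) ∧ (∀ i, q (i + 1) ≤ q i) ∧ (Function.support q).Finite

/-- The JSQ generator `G_Q` acting on a test function `f`.  The index `j` corresponds to
the paper's index `i = j + 1`; for `j = 0` the condition `∀ k < 0, q k = n` is vacuous, so
the first summand is the paper's `n λ 1(q_1 < n)(f(q+e^{(1)}) - f(q))` term, and the
summands `j ≥ 1` are the paper's arrival terms for `i ≥ 2`.  The second sum contains the
departure terms. -/
noncomputable def jsqGen (n : ℕ) (lam : ℝ) (f : (ℕ → ℕ) → ℝ) (q : ℕ → ℕ) : ℝ :=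
  (∑' j : ℕ, (n * lam) * (if (∀ k < j, q k = n) ∧ q j < n then (1 : ℝ) else 0) *
      (f (Function.update q j (q j + 1)) - f q)) +
  ∑' j : ℕ, ((q j : ℝ) - (q (j + 1) : ℝ)) * (f (Function.update q j (q j - 1)) - f q)

/-- A random element `Q` of `S` is generator-stationary if for every test function `f`
with `E|f(Q)| < ∞`, the expectation `E[G_Q f(Q)]` is well defined and equals `0`. -/
def GeneratorStationary {Ωp : Type*} [MeasurableSpace Ωp] (μ : Measure Ωp)
    (n : ℕ) (lam : ℝ) (Q : Ωp → ℕ → ℕ) : Prop :=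
  ∀ f : (ℕ → ℕ) → ℝ, Integrable (fun ω => f (Q ω)) μ →
    Integrable (fun ω => jsqGen n lam f (Q ω)) μ ∧
      (∫ ω, jsqGen n lam f (Q ω) ∂μ) = 0

/-!
In coordinates `q 0 = Q₁`, `q 1 = Q₂`, `q 2 = Q₃`, stationarity is applied to three families of test
functions; write `b = n (1 - λ)`.

* Single coordinates: the drifts telescope, and the finite support closes the telescope at infinity,
  which gives `E[Q₃] = n λ P(Q₂ = n)`. So everything rests on how rarely level two is full.
* `queueTest` for a monotone `φ`, with increments `Δφ`: it yields
  `b E[φ(Q₂)] ≤ E[(n - Q₁) φ(Q₂) + (n - Q₁ + 1) Q₂ Δφ(Q₂)]`, the boundary term at `Q₂ = n` being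
  cancelled exactly by the balance of `E[Q₃]`.
* `idleTest` for a monotone `ψ ≥ 0`: when `Q₂ > b` the number `n - Q₁` of idle servers is pushed
  down, and `E[(n - Q₁) (Q₂ - b) ψ(Q₂)] ≤ n E[ψ(Q₂)]`.

With `φ(y) = (y - k)⁺`, `ψ(y) = 1(y ≥ k)` and `k > b`, the ratio `y / (y - b)` is at most
`k / (k - b)` where `ψ` lives, so the last two combine to
`(1 - λ) E[(Q₂ - k)⁺] ≤ (2 + k / (k - b)) P(Q₂ ≥ k)`. The threshold `k = κ √n` bounds `E[Q₂]`; the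
threshold `l = κ̃ n` and Markov's inequality then bound `P(Q₂ = n)`, hence `E[Q₃]`.
-/

theorem integral_ite_one_zero {Ω : Type*} [MeasurableSpace Ω] {μ : Measure Ω} {p : Ω → Prop}
    [DecidablePred p] (hp : MeasurableSet {ω | p ω}) :
    ∫ ω, (if p ω then (1 : ℝ) else 0) ∂μ = μ.real {ω | p ω} := by
  simpa [Set.indicator_apply] using integral_indicator_one (μ := μ) hp

theorem monotone_ite_le_natCast (k : ℝ) :
    Monotone fun y : ℕ => if k ≤ (y : ℝ) then (1 : ℝ) else 0 := by
  intro y z hyz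
  have : (y : ℝ) ≤ z := mod_cast hyz
  dsimp only
  split_ifs <;> linarith

theorem monotone_natCast_sub_posPart (k : ℝ) : Monotone fun y : ℕ => ((y : ℝ) - k)⁺ :=
  posPart_mono.comp fun _ _ hyz => sub_le_sub_right (Nat.cast_le.2 hyz) k

theorem natCast_sub_posPart_le_pred_add_one (y : ℕ) (k : ℝ) :
    ((y : ℝ) - k)⁺ ≤ (((y - 1 : ℕ) : ℝ) - k)⁺ + 1 := by
  have hpred : (y : ℝ) ≤ ((y - 1 : ℕ) : ℝ) + 1 := mod_cast le_tsub_add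
  refine sup_le ?_ (by positivity)
  linarith [le_posPart (((y - 1 : ℕ) : ℝ) - k)]

theorem mul_posPart_add_le {a b k N : ℝ} {y : ℕ} (ha : 0 ≤ a) (hb : 0 ≤ b) (hbk : b < k)
    (hy : (y : ℝ) ≤ N) :
    a * ((y : ℝ) - k)⁺ + (a + 1) * (y * (((y : ℝ) - k)⁺ - (((y - 1 : ℕ) : ℝ) - k)⁺)) ≤
      (1 + k / (k - b)) * (a * ((y - b) * if k ≤ y then 1 else 0)) +
        N * if k ≤ y then 1 else 0 := by
  split_ifs with hky
  · have hincr : (a + 1) * (y * (((y : ℝ) - k)⁺ - (((y - 1 : ℕ) : ℝ) - k)⁺)) ≤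
        (a + 1) * (y * 1) := by
      gcongr
      exact sub_le_iff_le_add'.2 (natCast_sub_posPart_le_pred_add_one y k)
    have hratio : (y : ℝ) ≤ k / (k - b) * (y - b) := by
      rw [div_mul_eq_mul_div, le_div_iff₀ (sub_pos.2 hbk)]
      nlinarith
    rw [posPart_of_nonneg (sub_nonneg.2 hky)] at hincr ⊢
    linear_combination hincr + a * hratio + a * hbk.le + hy
  · have hyk : (y : ℝ) - k ≤ 0 := sub_nonpos.2 (not_le.1 hky).le
    have hpred : ((y - 1 : ℕ) : ℝ) - k ≤ 0 :=
      (sub_le_sub_right (Nat.cast_le.2 (Nat.sub_le y 1)) k).trans hyk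
    simp [posPart_of_nonpos hyk, posPart_of_nonpos hpred]

section Integrability

variable {Ω α : Type*} [MeasurableSpace Ω] {μ : Measure Ω} [IsFiniteMeasure μ]

theorem integrable_comp_of_finite_range [MeasurableSpace α] [DiscreteMeasurableSpace α]
    {X : Ω → α} (hX : Measurable X) (hfin : (Set.range X).Finite) (f : α → ℝ) :
    Integrable (fun ω => f (X ω)) μ := by
  obtain ⟨C, hC⟩ := (hfin.image fun a => ‖f a‖).bddAbove
  exact .of_bound (Measurable.of_discrete.comp hX).aestronglyMeasurable C
    (.of_forall fun ω => hC ⟨X ω, ⟨ω, rfl⟩, rfl⟩)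

theorem integrable_comp_coords {n : ℕ} {Q : Ω → ℕ → ℕ} (hQ : Measurable Q)
    (hS : ∀ ω, InS n (Q ω)) (F : ℕ → ℕ → ℝ) (i j : ℕ) :
    Integrable (fun ω => F (Q ω i) (Q ω j)) μ := by
  refine integrable_comp_of_finite_range (X := fun ω => (Q ω i, Q ω j)) (by fun_prop)
    (((Set.finite_Iic n).prod (Set.finite_Iic n)).subset ?_) fun p => F p.1 p.2
  rintro _ ⟨ω, rfl⟩
  exact ⟨(hS ω).1 i, (hS ω).1 j⟩

theorem integrable_coord {n : ℕ} {Q : Ω → ℕ → ℕ} (hQ : Measurable Q)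
    (hS : ∀ ω, InS n (Q ω)) (i : ℕ) : Integrable (fun ω => (Q ω i : ℝ)) μ :=
  integrable_comp_coords hQ hS (fun x _ => (x : ℝ)) i i

end Integrability

/-- The rate at which the number of jobs in places `m + 2` and beyond of their queues decreases:
such jobs depart at rate `q (m + 1)` and arrive at rate `n λ` when all `n` queues have length at
least `m + 1`, that is, when `q m = n`. -/
noncomputable def netOutflow (n : ℕ) (lam : ℝ) (q : ℕ → ℕ) (m : ℕ) : ℝ :=
  q (m + 1) - n * lam * (if q m = n then 1 else 0)

namespace InS

variable {n : ℕ} {q : ℕ → ℕ}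

theorem antitone (hq : InS n q) : Antitone q :=
  antitone_nat_of_succ_le hq.2.1

theorem eventually_eq_zero (hq : InS n q) : ∀ᶠ j in Filter.atTop, q j = 0 := by
  obtain ⟨B, hB⟩ := hq.2.2.bddAbove
  filter_upwards [Filter.eventually_gt_atTop B] with j hj
  by_contra hne
  exact hj.not_ge (hB hne)

theorem forall_lt_succ_eq_iff (hq : InS n q) (m : ℕ) : (∀ k < m + 1, q k = n) ↔ q m = n :=
  ⟨fun h => h m m.lt_succ_self, fun h k hk =>
    (hq.1 k).antisymm (h ▸ hq.antitone (Nat.le_of_lt_succ hk))⟩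

theorem jsqGen_coord_succ (hq : InS n q) (lam : ℝ) (m : ℕ) :
    jsqGen n lam (fun q => (q (m + 1) : ℝ)) q =
      netOutflow n lam q (m + 1) - netOutflow n lam q m := by
  have arrival : (if (∀ k < m + 1, q k = n) ∧ q (m + 1) < n then (1 : ℝ) else 0) =
      (if q m = n then 1 else 0) - (if q (m + 1) = n then 1 else 0) := by
    have := hq.1 m
    have := hq.2.1 m
    simp only [hq.forall_lt_succ_eq_iff]
    split_ifs <;> first | omega | simp
  have departure : ((q (m + 1) : ℝ) - q (m + 2)) * (((q (m + 1) - 1 : ℕ) : ℝ) - q (m + 1)) =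
      -((q (m + 1) : ℝ) - q (m + 2)) := by
    rcases Nat.eq_zero_or_pos (q (m + 1)) with h | h
    · have : q (m + 2) = 0 := Nat.eq_zero_of_le_zero (h ▸ hq.2.1 (m + 1))
      simp [h, this]
    · rw [Nat.cast_pred h]
      ring
  unfold jsqGen netOutflow
  rw [tsum_eq_single (m + 1) fun j hj => by simp [Function.update_of_ne hj.symm],
    tsum_eq_single (m + 1) fun j hj => by simp [Function.update_of_ne hj.symm]]
  simp only [Function.update_self, arrival, departure, Nat.cast_add_one]
  ring

theorem norm_netOutflow_le (hq : InS n q) (lam : ℝ) (m : ℕ) :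
    ‖netOutflow n lam q m‖ ≤ n + |n * lam| := by
  refine (norm_sub_le _ _).trans (add_le_add ?_ ?_)
  · simpa using hq.1 (m + 1)
  · split_ifs
    · simp
    · simpa using abs_nonneg (n * lam)

theorem tendsto_netOutflow (hq : InS n q) (lam : ℝ) :
    Filter.Tendsto (netOutflow n lam q) Filter.atTop (nhds 0) := by
  refine tendsto_const_nhds.congr' ?_
  filter_upwards [hq.eventually_eq_zero] with m hm
  have hm' : q (m + 1) = 0 := Nat.eq_zero_of_le_zero (hm ▸ hq.2.1 m)
  rcases n.eq_zero_or_pos with rfl | hn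
  · simp [netOutflow, hm']
  · simp [netOutflow, hm, hm', hn.ne]

end InS

theorem integrable_netOutflow {Ω : Type*} [MeasurableSpace Ω] {μ : Measure Ω} [IsFiniteMeasure μ]
    {n : ℕ} {lam : ℝ} {Q : Ω → ℕ → ℕ} (hQ : Measurable Q) (hS : ∀ ω, InS n (Q ω)) (m : ℕ) :
    Integrable (fun ω => netOutflow n lam (Q ω) m) μ :=
  integrable_comp_coords hQ hS (fun x y => (y : ℝ) - n * lam * (if x = n then 1 else 0)) m (m + 1)

theorem jsqGen_comp_two (n : ℕ) (lam : ℝ) (F : ℕ → ℕ → ℝ) (q : ℕ → ℕ) :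
    jsqGen n lam (fun q => F (q 0) (q 1)) q =
      n * lam * (if q 0 < n then 1 else 0) * (F (q 0 + 1) (q 1) - F (q 0) (q 1)) +
      n * lam * (if q 0 = n ∧ q 1 < n then 1 else 0) * (F (q 0) (q 1 + 1) - F (q 0) (q 1)) +
      ((q 0 : ℝ) - q 1) * (F (q 0 - 1) (q 1) - F (q 0) (q 1)) +
      ((q 1 : ℝ) - q 2) * (F (q 0) (q 1 - 1) - F (q 0) (q 1)) := by
  have ne_of_notMem {j : ℕ} (hj : j ∉ Finset.range 2) : 0 ≠ j ∧ 1 ≠ j := by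
    rw [Finset.mem_range] at hj
    omega
  unfold jsqGen
  rw [tsum_eq_sum (s := Finset.range 2) fun j hj => by
      simp [Function.update_of_ne (ne_of_notMem hj).1, Function.update_of_ne (ne_of_notMem hj).2],
    tsum_eq_sum (s := Finset.range 2) fun j hj => by
      simp [Function.update_of_ne (ne_of_notMem hj).1, Function.update_of_ne (ne_of_notMem hj).2]]
  simp [Finset.sum_range_succ, Function.update_of_ne, add_assoc]

/-- The test function `∑_{i < y} φ i - (n - x) φ y` of the first two levels. An arrival raises it
by `φ y` both when it finds an idle server and when it opens a new queue at level two, so its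
drift sees the slack `n (1 - λ)` of the total arrival rate. -/
def queueTest (n : ℕ) (φ : ℕ → ℝ) (x y : ℕ) : ℝ :=
  ∑ i ∈ Finset.range y, φ i - ((n : ℝ) - x) * φ y

/-- The test function `(n - x)² ψ y`, the squared number of idle servers weighted by the second
level. -/
def idleTest (n : ℕ) (ψ : ℕ → ℝ) (x y : ℕ) : ℝ :=
  ((n : ℝ) - x) ^ 2 * ψ y

namespace InS

variable {n : ℕ} {q : ℕ → ℕ}

theorem jsqGen_queueTest (hq : InS n q) (lam : ℝ) (φ : ℕ → ℝ) :
    jsqGen n lam (fun q => queueTest n φ (q 0) (q 1)) q =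
      n * lam * (φ (q 1) - (if q 1 = n then 1 else 0) * φ n) - ((q 0 : ℝ) - q 1) * φ (q 1) +
        ((q 1 : ℝ) - q 2) * (((n : ℝ) - q 0) * (φ (q 1) - φ (q 1 - 1)) - φ (q 1 - 1)) := by
  have h0 := hq.1 0
  have h1 : q 1 ≤ q 0 := hq.2.1 0
  have h2 : q 2 ≤ q 1 := hq.2.1 1
  rw [jsqGen_comp_two]
  generalize q 0 = x, q 1 = y, q 2 = z at *
  have arrivals : (if x < n then 1 else 0) * (queueTest n φ (x + 1) y - queueTest n φ x y) +
      (if x = n ∧ y < n then 1 else 0) * (queueTest n φ x (y + 1) - queueTest n φ x y) =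
      φ y - (if y = n then 1 else 0) * φ n := by
    unfold queueTest
    rcases h0.lt_or_eq with hx | rfl
    · simp [hx, hx.ne, (h1.trans_lt hx).ne]
      ring
    · rcases h1.lt_or_eq with hy | rfl
      · simp [hy, hy.ne, Finset.sum_range_succ]
      · simp
  have departure_one : ((x : ℝ) - y) * (queueTest n φ (x - 1) y - queueTest n φ x y) =
      -(((x : ℝ) - y) * φ y) := by
    unfold queueTest
    rcases x with _ | x
    · simp [Nat.le_zero.1 h1]
    · push_cast [Nat.add_sub_cancel]
      ring
  have departure_two : ((y : ℝ) - z) * (queueTest n φ x (y - 1) - queueTest n φ x y) =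
      ((y : ℝ) - z) * (((n : ℝ) - x) * (φ y - φ (y - 1)) - φ (y - 1)) := by
    unfold queueTest
    rcases y with _ | y
    · simp [Nat.le_zero.1 h2]
    · simp only [Nat.add_sub_cancel, Finset.sum_range_succ]
      ring
  linear_combination n * lam * arrivals + departure_one + departure_two

theorem jsqGen_queueTest_le (hq : InS n q) (lam : ℝ) {φ : ℕ → ℝ} (hφ : Monotone φ) :
    jsqGen n lam (fun q => queueTest n φ (q 0) (q 1)) q ≤
      (((n : ℝ) - q 0) * φ (q 1) + ((n : ℝ) - q 0 + 1) * (q 1 * (φ (q 1) - φ (q 1 - 1))) -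
          n * (1 - lam) * φ (q 1)) +
        φ n * netOutflow n lam q 1 := by
  have hidle : (0 : ℝ) ≤ (n : ℝ) - q 0 := sub_nonneg.2 (mod_cast hq.1 0)
  have hincr : 0 ≤ φ (q 1) - φ (q 1 - 1) := sub_nonneg.2 (hφ (Nat.sub_le _ _))
  have hlast : (q 2 : ℝ) * φ (q 1 - 1) ≤ q 2 * φ n :=
    mul_le_mul_of_nonneg_left (hφ ((Nat.sub_le _ _).trans (hq.1 1))) (Nat.cast_nonneg _)
  have hdrop : (0 : ℝ) ≤ q 2 * (((n : ℝ) - q 0) * (φ (q 1) - φ (q 1 - 1))) := by positivity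
  rw [hq.jsqGen_queueTest, netOutflow]
  linear_combination hlast + hdrop

theorem jsqGen_idleTest_le (hq : InS n q) {lam : ℝ} (hlam₀ : 0 ≤ lam) (hlam₁ : lam ≤ 1)
    {ψ : ℕ → ℝ} (hψ : Monotone ψ) (hψ₀ : 0 ≤ ψ) :
    jsqGen n lam (fun q => idleTest n ψ (q 0) (q 1)) q ≤
      2 * (n * ψ (q 1) - ((n : ℝ) - q 0) * ((q 1 - n * (1 - lam)) * ψ (q 1))) := by
  have h0 := hq.1 0
  have h1 : q 1 ≤ q 0 := hq.2.1 0
  have h2 : (q 2 : ℝ) ≤ q 1 := mod_cast hq.2.1 1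
  rw [jsqGen_comp_two]
  generalize q 0 = x, q 1 = y, (q 2 : ℝ) = z at *
  have hy : 0 ≤ ψ y := hψ₀ y
  have hidle : (0 : ℝ) ≤ (n : ℝ) - x := sub_nonneg.2 (mod_cast h0)
  have arrival_one : n * lam * (if x < n then 1 else 0) *
      (idleTest n ψ (x + 1) y - idleTest n ψ x y) ≤
      n * lam * ((1 - 2 * ((n : ℝ) - x)) * ψ y) := by
    unfold idleTest
    rcases h0.lt_or_eq with hx | rfl
    · apply le_of_eq
      push_cast [if_pos hx]
      ring
    · simp only [lt_irrefl, if_false, mul_zero, zero_mul, sub_self, sub_zero, one_mul]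
      positivity
  have arrival_two : n * lam * (if x = n ∧ y < n then 1 else 0) *
      (idleTest n ψ x (y + 1) - idleTest n ψ x y) = 0 := by
    unfold idleTest
    split_ifs with h <;> simp [*]
  have departure_one : ((x : ℝ) - y) * (idleTest n ψ (x - 1) y - idleTest n ψ x y) =
      ((x : ℝ) - y) * ((1 + 2 * ((n : ℝ) - x)) * ψ y) := by
    unfold idleTest
    rcases x with _ | x
    · simp [Nat.le_zero.1 h1]
    · push_cast [Nat.add_sub_cancel]
      ring
  have departure_two : ((y : ℝ) - z) * (idleTest n ψ x (y - 1) - idleTest n ψ x y) ≤ 0 :=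
    mul_nonpos_of_nonneg_of_nonpos (sub_nonneg.2 h2) (sub_nonpos.2
      (mul_le_mul_of_nonneg_left (hψ (Nat.sub_le _ _)) (sq_nonneg _)))
  have hslack : (0 : ℝ) ≤
      (n * (1 - lam) + y + ((n : ℝ) - x) + 2 * ((n : ℝ) - x) ^ 2) * ψ y := by
    have := sub_nonneg.2 hlam₁
    positivity
  linear_combination arrival_one + arrival_two + departure_one + departure_two + hslack

end InS

namespace GeneratorStationary

variable {Ω : Type*} [MeasurableSpace Ω] {μ : Measure Ω} {n : ℕ} {lam : ℝ} {Q : Ω → ℕ → ℕ}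

theorem integral_nonneg_of_jsqGen_le (hstat : GeneratorStationary μ n lam Q)
    {f : (ℕ → ℕ) → ℝ} (hf : Integrable (fun ω => f (Q ω)) μ) {h : Ω → ℝ} (hh : Integrable h μ)
    (hle : ∀ ω, jsqGen n lam f (Q ω) ≤ h ω) : 0 ≤ ∫ ω, h ω ∂μ :=
  (hstat f hf).2 ▸ integral_mono (hstat f hf).1 hh hle

variable [IsFiniteMeasure μ]

theorem integral_netOutflow_succ (hstat : GeneratorStationary μ n lam Q) (hQ : Measurable Q)
    (hS : ∀ ω, InS n (Q ω)) (m : ℕ) :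
    ∫ ω, netOutflow n lam (Q ω) (m + 1) ∂μ = ∫ ω, netOutflow n lam (Q ω) m ∂μ := by
  rw [← sub_eq_zero, ← integral_sub (integrable_netOutflow hQ hS _)
    (integrable_netOutflow hQ hS _)]
  simpa only [(hS _).jsqGen_coord_succ] using
    (hstat (fun q => (q (m + 1) : ℝ)) (integrable_coord hQ hS (m + 1))).2

theorem integral_netOutflow (hstat : GeneratorStationary μ n lam Q) (hQ : Measurable Q)
    (hS : ∀ ω, InS n (Q ω)) (m : ℕ) : ∫ ω, netOutflow n lam (Q ω) m ∂μ = 0 := by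
  have hlim : Filter.Tendsto (fun j => ∫ ω, netOutflow n lam (Q ω) j ∂μ) Filter.atTop (nhds 0) := by
    simpa only [integral_zero] using tendsto_integral_of_dominated_convergence (μ := μ)
      (fun _ => n + |n * lam|) (fun j => (integrable_netOutflow hQ hS j).aestronglyMeasurable)
      (integrable_const _) (fun j => .of_forall fun ω => (hS ω).norm_netOutflow_le lam j)
      (.of_forall fun ω => (hS ω).tendsto_netOutflow lam)
  have hconst : ∀ j ≥ m, ∫ ω, netOutflow n lam (Q ω) j ∂μ = ∫ ω, netOutflow n lam (Q ω) m ∂μ :=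
    Nat.le_induction rfl fun j _ ih => (hstat.integral_netOutflow_succ hQ hS j).trans ih
  exact tendsto_nhds_unique (tendsto_const_nhds.congr' (Filter.eventually_ge_atTop m |>.mono
    fun j hj => (hconst j hj).symm)) hlim

theorem integral_coord_succ (hstat : GeneratorStationary μ n lam Q) (hQ : Measurable Q)
    (hS : ∀ ω, InS n (Q ω)) (m : ℕ) :
    ∫ ω, (Q ω (m + 1) : ℝ) ∂μ = n * lam * μ.real {ω | Q ω m = n} := by
  have hfull := integrable_comp_coords (μ := μ) hQ hS (fun x _ => if x = n then (1 : ℝ) else 0) m m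
  have hzero := hstat.integral_netOutflow hQ hS m
  unfold netOutflow at hzero
  rwa [integral_sub (integrable_coord hQ hS _) (hfull.const_mul _), integral_const_mul,
    integral_ite_one_zero (measurableSet_eq_fun (by fun_prop) measurable_const),
    sub_eq_zero] at hzero

theorem mul_integral_comp_coord_one_le (hstat : GeneratorStationary μ n lam Q) (hQ : Measurable Q)
    (hS : ∀ ω, InS n (Q ω)) {φ : ℕ → ℝ} (hφ : Monotone φ) :
    n * (1 - lam) * ∫ ω, φ (Q ω 1) ∂μ ≤
      ∫ ω, (((n : ℝ) - Q ω 0) * φ (Q ω 1) +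
        ((n : ℝ) - Q ω 0 + 1) * (Q ω 1 * (φ (Q ω 1) - φ (Q ω 1 - 1)))) ∂μ := by
  have hdrift := integrable_comp_coords (μ := μ) hQ hS (fun x y => ((n : ℝ) - x) * φ y +
    ((n : ℝ) - x + 1) * (y * (φ y - φ (y - 1)))) 0 1
  have hlevel := (integrable_comp_coords (μ := μ) hQ hS (fun _ y => φ y) 0 1).const_mul
    (n * (1 - lam))
  have hflow := (integrable_netOutflow (μ := μ) (lam := lam) hQ hS 1).const_mul (φ n)
  have hnonneg := hstat.integral_nonneg_of_jsqGen_le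
    (integrable_comp_coords hQ hS (queueTest n φ) 0 1) ((hdrift.sub hlevel).add hflow)
    fun ω => (hS ω).jsqGen_queueTest_le lam hφ
  rw [integral_add' (hdrift.sub hlevel) hflow, integral_sub' hdrift hlevel, integral_const_mul,
    integral_const_mul, hstat.integral_netOutflow hQ hS, mul_zero, add_zero] at hnonneg
  exact sub_nonneg.1 hnonneg

theorem integral_idle_mul_le (hstat : GeneratorStationary μ n lam Q) (hQ : Measurable Q)
    (hS : ∀ ω, InS n (Q ω)) (hlam₀ : 0 ≤ lam) (hlam₁ : lam ≤ 1)
    {ψ : ℕ → ℝ} (hψ : Monotone ψ) (hψ₀ : 0 ≤ ψ) :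
    ∫ ω, ((n : ℝ) - Q ω 0) * ((Q ω 1 - n * (1 - lam)) * ψ (Q ω 1)) ∂μ ≤
      n * ∫ ω, ψ (Q ω 1) ∂μ := by
  have hidle := integrable_comp_coords (μ := μ) hQ hS
    (fun x y => ((n : ℝ) - x) * ((y - n * (1 - lam)) * ψ y)) 0 1
  have hlevel := (integrable_comp_coords (μ := μ) hQ hS (fun _ y => ψ y) 0 1).const_mul (n : ℝ)
  have hnonneg := hstat.integral_nonneg_of_jsqGen_le
    (integrable_comp_coords hQ hS (idleTest n ψ) 0 1) ((hlevel.sub hidle).const_mul 2)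
    fun ω => (hS ω).jsqGen_idleTest_le hlam₀ hlam₁ hψ hψ₀
  rw [integral_const_mul, integral_sub' hlevel hidle, integral_const_mul] at hnonneg
  exact sub_nonneg.1 (nonneg_of_mul_nonneg_right hnonneg two_pos)

theorem mul_integral_posPart_le (hstat : GeneratorStationary μ n lam Q) (hQ : Measurable Q)
    (hS : ∀ ω, InS n (Q ω)) (hlam₀ : 0 ≤ lam) (hlam₁ : lam ≤ 1) {k : ℝ}
    (hk : n * (1 - lam) < k) :
    n * (1 - lam) * ∫ ω, ((Q ω 1 : ℝ) - k)⁺ ∂μ ≤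
      n * (2 + k / (k - n * (1 - lam))) * μ.real {ω | k ≤ Q ω 1} := by
  have hb : 0 ≤ n * (1 - lam) := mul_nonneg n.cast_nonneg (sub_nonneg.2 hlam₁)
  have hc : 0 ≤ 1 + k / (k - n * (1 - lam)) :=
    add_nonneg zero_le_one (div_nonneg (hb.trans hk.le) (sub_pos.2 hk).le)
  rw [← integral_ite_one_zero (measurableSet_le measurable_const (by fun_prop))]
  set φ : ℕ → ℝ := fun y => ((y : ℝ) - k)⁺
  set ψ : ℕ → ℝ := fun y => if k ≤ y then 1 else 0
  have hψ₀ : 0 ≤ ψ := fun y => ite_nonneg zero_le_one le_rfl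
  have hidle := (integrable_comp_coords (μ := μ) hQ hS
    (fun x y => ((n : ℝ) - x) * ((y - n * (1 - lam)) * ψ y)) 0 1).const_mul
      (1 + k / (k - n * (1 - lam)))
  have hlevel := (integrable_comp_coords (μ := μ) hQ hS (fun _ y => ψ y) 0 1).const_mul (n : ℝ)
  calc n * (1 - lam) * ∫ ω, φ (Q ω 1) ∂μ
      ≤ ∫ ω, (((n : ℝ) - Q ω 0) * φ (Q ω 1) +
          ((n : ℝ) - Q ω 0 + 1) * (Q ω 1 * (φ (Q ω 1) - φ (Q ω 1 - 1)))) ∂μ :=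
        hstat.mul_integral_comp_coord_one_le hQ hS (monotone_natCast_sub_posPart k)
    _ ≤ ∫ ω, ((1 + k / (k - n * (1 - lam))) *
          (((n : ℝ) - Q ω 0) * ((Q ω 1 - n * (1 - lam)) * ψ (Q ω 1))) + n * ψ (Q ω 1)) ∂μ :=
        integral_mono (integrable_comp_coords hQ hS (fun x y => ((n : ℝ) - x) * φ y +
          ((n : ℝ) - x + 1) * (y * (φ y - φ (y - 1)))) 0 1) (hidle.add hlevel) fun ω =>
            mul_posPart_add_le (sub_nonneg.2 (mod_cast (hS ω).1 0)) hb hk (mod_cast (hS ω).1 1)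
    _ = (1 + k / (k - n * (1 - lam))) *
          ∫ ω, ((n : ℝ) - Q ω 0) * ((Q ω 1 - n * (1 - lam)) * ψ (Q ω 1)) ∂μ +
            n * ∫ ω, ψ (Q ω 1) ∂μ := by
        rw [integral_add hidle hlevel, integral_const_mul, integral_const_mul]
    _ ≤ (1 + k / (k - n * (1 - lam))) * (n * ∫ ω, ψ (Q ω 1) ∂μ) + n * ∫ ω, ψ (Q ω 1) ∂μ := by
        gcongr
        exact hstat.integral_idle_mul_le hQ hS hlam₀ hlam₁ (monotone_ite_le_natCast k) hψ₀
    _ = n * (2 + k / (k - n * (1 - lam))) * ∫ ω, ψ (Q ω 1) ∂μ := by ring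

theorem integral_posPart_le (hstat : GeneratorStationary μ n lam Q) (hQ : Measurable Q)
    (hS : ∀ ω, InS n (Q ω)) (hn : 0 < n) (hlam₀ : 0 ≤ lam) (hlam₁ : lam < 1) {k : ℝ}
    (hk : n * (1 - lam) < k) :
    ∫ ω, ((Q ω 1 : ℝ) - k)⁺ ∂μ ≤
      1 / (1 - lam) * (2 + k / (k - n * (1 - lam))) * μ.real {ω | k ≤ Q ω 1} := by
  have h := hstat.mul_integral_posPart_le hQ hS hlam₀ hlam₁.le hk
  rw [mul_assoc, mul_assoc, mul_le_mul_iff_right₀ (Nat.cast_pos.2 hn)] at h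
  rwa [mul_assoc, one_div_mul_eq_div, le_div_iff₀' (sub_pos.2 hlam₁)]

theorem mul_measureReal_eq_le (hstat : GeneratorStationary μ n lam Q) (hQ : Measurable Q)
    (hS : ∀ ω, InS n (Q ω)) (hn : 0 < n) (hlam₀ : 0 ≤ lam) (hlam₁ : lam < 1) {l : ℝ}
    (hl : n * (1 - lam) < l) :
    (n - l) * μ.real {ω | Q ω 1 = n} ≤
      1 / (1 - lam) * (2 + l / (l - n * (1 - lam))) * (1 / l * ∫ ω, (Q ω 1 : ℝ) ∂μ) := by
  have hl₀ : 0 < l := (mul_nonneg n.cast_nonneg (sub_pos.2 hlam₁).le).trans_lt hl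
  have hcoeff : 0 ≤ 1 / (1 - lam) * (2 + l / (l - n * (1 - lam))) := by
    have := sub_pos.2 hlam₁
    have := sub_pos.2 hl
    positivity
  have hpos := integrable_comp_coords (μ := μ) hQ hS (fun _ y => ((y : ℝ) - l)⁺) 0 1
  have hfull : (n - l) * μ.real {ω | Q ω 1 = n} ≤ ∫ ω, ((Q ω 1 : ℝ) - l)⁺ ∂μ := by
    rw [← integral_ite_one_zero (measurableSet_eq_fun (by fun_prop) measurable_const),
      ← integral_const_mul]
    refine integral_mono ((integrable_comp_coords hQ hS
      (fun _ y => if y = n then (1 : ℝ) else 0) 0 1).const_mul _) hpos fun ω => ?_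
    dsimp only
    split_ifs with h
    · simpa [h] using le_posPart ((n : ℝ) - l)
    · simp
  have hmarkov : μ.real {ω | l ≤ Q ω 1} ≤ 1 / l * ∫ ω, (Q ω 1 : ℝ) ∂μ := by
    rw [one_div_mul_eq_div, le_div_iff₀' hl₀]
    exact mul_meas_ge_le_integral_of_nonneg (.of_forall fun ω => Nat.cast_nonneg _)
      (integrable_coord hQ hS 1) l
  exact (hfull.trans (hstat.integral_posPart_le hQ hS hn hlam₀ hlam₁ hl)).trans
    (mul_le_mul_of_nonneg_left hmarkov hcoeff)

theorem integral_coord_le (hstat : GeneratorStationary μ n lam Q) (hQ : Measurable Q)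
    (hS : ∀ ω, InS n (Q ω)) (hlam₁ : lam < 1) {l : ℝ}
    (hl : n * (1 - lam) < l) (hln : l < n) {j : ℕ} (hj : 2 ≤ j) :
    ∫ ω, (Q ω j : ℝ) ∂μ ≤
      n / (n - l) * (1 / (1 - lam) * (2 + l / (l - n * (1 - lam))) *
        (1 / l * ∫ ω, (Q ω 1 : ℝ) ∂μ)) := by
  have hl₀ : 0 < l := (mul_nonneg n.cast_nonneg (sub_pos.2 hlam₁).le).trans_lt hl
  have hn : 0 < n := Nat.cast_pos.1 (hl₀.trans hln)
  have hlam₀ : 0 ≤ lam := (pos_of_mul_pos_right (by linarith : 0 < n * lam) n.cast_nonneg).le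
  calc ∫ ω, (Q ω j : ℝ) ∂μ
      ≤ ∫ ω, (Q ω 2 : ℝ) ∂μ :=
        integral_mono (integrable_coord hQ hS j) (integrable_coord hQ hS 2) fun ω =>
          Nat.cast_le.2 ((hS ω).antitone hj)
    _ = n * lam * μ.real {ω | Q ω 1 = n} := hstat.integral_coord_succ hQ hS 1
    _ ≤ n * μ.real {ω | Q ω 1 = n} := by
        gcongr
        exact mul_le_of_le_one_right n.cast_nonneg hlam₁.le
    _ = n / (n - l) * ((n - l) * μ.real {ω | Q ω 1 = n}) := by
        rw [← mul_assoc, div_mul_cancel₀ _ (sub_pos.2 hln).ne']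
    _ ≤ _ := mul_le_mul_of_nonneg_left (hstat.mul_measureReal_eq_le hQ hS hn hlam₀ hlam₁ hl)
        (div_nonneg n.cast_nonneg (sub_pos.2 hln).le)

theorem integral_coord_one_le (hstat : GeneratorStationary μ n lam Q) (hQ : Measurable Q)
    (hS : ∀ ω, InS n (Q ω)) (hn : 0 < n) (hlam₀ : 0 ≤ lam) (hlam₁ : lam < 1) {k : ℝ}
    (hk : n * (1 - lam) < k) :
    ∫ ω, (Q ω 1 : ℝ) ∂μ ≤
      (k + 1 / (1 - lam) * (2 + k / (k - n * (1 - lam)))) * μ.real Set.univ := by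
  have hk₀ : 0 ≤ k := (mul_nonneg n.cast_nonneg (sub_pos.2 hlam₁).le).trans hk.le
  have hpos := integrable_comp_coords (μ := μ) hQ hS (fun _ y => ((y : ℝ) - k)⁺) 0 1
  calc ∫ ω, (Q ω 1 : ℝ) ∂μ
      ≤ ∫ ω, (k + ((Q ω 1 : ℝ) - k)⁺) ∂μ :=
        integral_mono (integrable_coord hQ hS 1) ((integrable_const k).add hpos) fun ω =>
          sub_le_iff_le_add'.1 (le_posPart _)
    _ = k * μ.real Set.univ + ∫ ω, ((Q ω 1 : ℝ) - k)⁺ ∂μ := by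
        rw [integral_add (integrable_const k) hpos, integral_const, smul_eq_mul, mul_comm]
    _ ≤ k * μ.real Set.univ +
          1 / (1 - lam) * (2 + k / (k - n * (1 - lam))) * μ.real {ω | k ≤ Q ω 1} := by
        gcongr
        exact hstat.integral_posPart_le hQ hS hn hlam₀ hlam₁ hk
    _ ≤ k * μ.real Set.univ +
          1 / (1 - lam) * (2 + k / (k - n * (1 - lam))) * μ.real Set.univ := by
        have := sub_pos.2 hlam₁
        have := sub_pos.2 hk
        gcongr
        · exact measure_ne_top μ _
        · exact Set.subset_univ _
    _ = _ := (add_mul _ _ _).symm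

theorem integral_coord_le_of_thresholds (hstat : GeneratorStationary μ n lam Q)
    (hQ : Measurable Q) (hS : ∀ ω, InS n (Q ω)) (hlam₁ : lam < 1) {k l : ℝ}
    (hk : n * (1 - lam) < k) (hl : n * (1 - lam) < l) (hln : l < n) {j : ℕ} (hj : 2 ≤ j) :
    ∫ ω, (Q ω j : ℝ) ∂μ ≤
      n / (n - l) * (1 / (1 - lam) * (2 + l / (l - n * (1 - lam))) *
        (1 / l * ((k + 1 / (1 - lam) * (2 + k / (k - n * (1 - lam)))) * μ.real Set.univ))) := by
  have hl₀ : 0 < l := (mul_nonneg n.cast_nonneg (sub_pos.2 hlam₁).le).trans_lt hl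
  have hn : 0 < n := Nat.cast_pos.1 (hl₀.trans hln)
  have hlam₀ : 0 ≤ lam := (pos_of_mul_pos_right (by linarith : 0 < n * lam) n.cast_nonneg).le
  have := sub_pos.2 hlam₁
  have := sub_pos.2 hl
  have := sub_pos.2 hln
  refine (hstat.integral_coord_le hQ hS hlam₁ hl hln hj).trans ?_
  gcongr
  exact hstat.integral_coord_one_le hQ hS hn hlam₀ hlam₁ hk

end GeneratorStationary

theorem halfinWhitt_bound_eq {N s β κ κt : ℝ} (hs : s ≠ 0) (hN : s ^ 2 = N) :
    N / (N - κt * N) *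
        (1 / (β / s) * (2 + κt * N / (κt * N - N * (β / s))) *
          (1 / (κt * N) *
            (κ * s + 1 / (β / s) * (2 + κ * s / (κ * s - N * (β / s)))))) =
      1 / (β * (1 - κt)) * (2 + κt / (κt - β / s)) * (1 / κt) *
        (κ + 1 / β * (2 + κ / (κ - β))) := by
  subst hN
  have hl_ratio : κt * s ^ 2 / (κt * s ^ 2 - s ^ 2 * (β / s)) = κt / (κt - β / s) := by
    rw [mul_comm (s ^ 2), ← sub_mul, mul_div_mul_right _ _ (pow_ne_zero 2 hs)]
  have hk_ratio : κ * s / (κ * s - s ^ 2 * (β / s)) = κ / (κ - β) := by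
    rw [show s ^ 2 * (β / s) = β * s by field_simp, ← sub_mul, mul_div_mul_right _ _ hs]
  have hfull : s ^ 2 / (s ^ 2 - κt * s ^ 2) = 1 / (1 - κt) := by
    rw [← one_sub_mul, div_mul_cancel_right₀ (pow_ne_zero 2 hs), one_div]
  rw [hl_ratio, hk_ratio, hfull]
  field_simp

theorem halfinWhitt_bound_le {β b ε κ κt : ℝ} (hβ : 0 < β) (hκ : β < κ) (hb : b < κt)
    (hε : 0 ≤ ε) (hεκt : ε < κt) (hκt1 : κt < 1) :
    1 / (β * (1 - κt)) * (2 + κt / (κt - b)) * (1 / κt) * (κ + 1 / β * (2 + κ / (κ - β))) ≤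
      1 / (β * (1 - κt)) * (12 + 6 * κt / (κt - b)) * (1 / (κt - ε)) *
        (2 * κ + 1 / β * (12 + 6 * κ / (κ - β))) := by
  have hκ₀ := hβ.trans hκ
  have hκt₀ := hε.trans_lt hεκt
  have := sub_pos.2 hκ
  have := sub_pos.2 hb
  have := sub_pos.2 hεκt
  have := sub_pos.2 hκt1
  gcongr <;> linarith

theorem stmt2_general {Ωp : Type*} [MeasurableSpace Ωp] (μ : Measure Ωp)
    [IsProbabilityMeasure μ] (n : ℕ) (hn : 1 ≤ n) (β : ℝ) (hβ : 0 < β)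
    (Q : Ωp → ℕ → ℕ) (hQmeas : Measurable Q) (hQS : ∀ ω, InS n (Q ω))
    (hstat : GeneratorStationary μ n (1 - β / Real.sqrt n) Q)
    (j : ℕ) (hj : 2 ≤ j) (κ : ℝ) (hκ : β < κ)
    (κt : ℝ) (hκt : β / Real.sqrt n < κt) (hκt1 : κt < 1) :
    ∫ ω, (Q ω j : ℝ) ∂μ ≤
      1 / (β * (1 - κt)) * (2 + κt / (κt - β / Real.sqrt n)) * (1 / κt) *
        (κ + 1 / β * (2 + κ / (κ - β))) := by
  have hn₀ : (0 : ℝ) < n := Nat.cast_pos.2 hn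
  have hs₀ : 0 < Real.sqrt n := Real.sqrt_pos.2 hn₀
  have hs_sq : Real.sqrt n ^ 2 = n := Real.sq_sqrt hn₀.le
  have hk : n * (1 - (1 - β / Real.sqrt n)) < κ * Real.sqrt n := by
    rw [sub_sub_cancel, mul_div_left_comm, Real.div_sqrt]
    gcongr
  have hl : n * (1 - (1 - β / Real.sqrt n)) < κt * n := by
    rw [sub_sub_cancel, mul_comm]
    gcongr
  have hbound := hstat.integral_coord_le_of_thresholds hQmeas hQS
    (sub_lt_self 1 (div_pos hβ hs₀)) hk hl (mul_lt_of_lt_one_left hn₀ hκt1) hj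
  rw [probReal_univ, mul_one, sub_sub_cancel] at hbound
  exact hbound.trans_eq (halfinWhitt_bound_eq hs₀.ne' hs_sq)

/-- in the Halfin-Whitt regime `λ = 1 - β/√n`, for a generator-stationary
`Q`, if `max(β/√n, 1/n) < 1` then for every `i ≥ 3` (here `Q ω (i-1)` is the paper's
`Q_i`), every `κ > β` and every `κ̃ ∈ (max(β/√n, 1/n), 1)`:
`E[Q_i] ≤ (1/(β(1-κ̃)))(12 + 6κ̃/(κ̃ - β/√n))·(1/(κ̃ - 1/n))·(2κ + (1/β)(12 + 6κ/(κ-β)))`. -/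
theorem stmt2 {Ωp : Type*} [MeasurableSpace Ωp] (μ : Measure Ωp)
    [IsProbabilityMeasure μ] (n : ℕ) (hn : 1 ≤ n) (β : ℝ) (hβ : 0 < β)
    (hlam : 0 < 1 - β / Real.sqrt n)
    (Q : Ωp → ℕ → ℕ) (hQmeas : Measurable Q) (hQS : ∀ ω, InS n (Q ω))
    (hstat : GeneratorStationary μ n (1 - β / Real.sqrt n) Q)
    (hmax : max (β / Real.sqrt n) (1 / (n : ℝ)) < 1) :
    ∀ i : ℕ, 3 ≤ i → ∀ κ : ℝ, β < κ →
      ∀ κt : ℝ, max (β / Real.sqrt n) (1 / (n : ℝ)) < κt → κt < 1 →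
        (∫ ω, (Q ω (i - 1) : ℝ) ∂μ) ≤
          1 / (β * (1 - κt)) * (12 + 6 * κt / (κt - β / Real.sqrt n)) *
            (1 / (κt - 1 / n)) *
              (2 * κ + 1 / β * (12 + 6 * κ / (κ - β))) := by
  intro i hi κ hκ κt hκt hκt1
  obtain ⟨hb, hε⟩ := max_lt_iff.1 hκt
  exact (stmt2_general μ n hn β hβ Q hQmeas hQS hstat (i - 1) (Nat.le_sub_one_of_lt hi) κ hκ
    κt hb hκt1).trans (halfinWhitt_bound_le hβ hκ hb (by positivity) hε hκt1)
end

section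
/- Fix κ_1 and κ_2 with β < κ_1 < κ_2. If x ∈ Ω satisfies x ≥ Γ^(κ_2), then x > Γ^(κ_1); that is, the curve Γ^(κ_2) lies strictly above the curve Γ^(κ_1). -/
/-- `(ν, η)` solves the nonlinear system of Lemma `gamma` for initial value `x₁`, at
level `κ`. -/
def GammaSol (n : ℕ) (β κ x1 ν η : ℝ) : Prop :=
  κ / Real.sqrt n ≤ ν ∧ 0 ≤ η ∧
    -(β / Real.sqrt n) + (x1 + β / Real.sqrt n) * Real.exp (-η) +
        η * ν * Real.exp (-η) = 0 ∧
    ν * Real.exp (-η) = κ / Real.sqrt n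

/-!
Write `b = β / √n` and `k = κ / √n`. The system says `ν = k * exp η` and
`η * ν = b * (exp η - 1) - x₁`. Suppose `k₁ < k₂` but `ν₂ ≤ ν₁`; then `η₂ < η₁`.
Subtracting the two second equations gives
`b * (exp η₁ - exp η₂) = η₁ * ν₁ - η₂ * ν₂ ≥ ν₁ * (η₁ - η₂) = k₁ * exp η₁ * (η₁ - η₂)`,
which exceeds `k₁ * (exp η₁ - exp η₂)` by strict convexity of `exp`; this contradicts `b ≤ k₁`.
-/

theorem exp_sub_exp_lt_exp_mul_sub {s t : ℝ} (hst : s ≠ t) :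
    Real.exp t - Real.exp s < Real.exp t * (t - s) := by
  have tangent : s - t + 1 < Real.exp (s - t) := Real.add_one_lt_exp (sub_ne_zero.mpr hst)
  calc
    Real.exp t - Real.exp s = Real.exp t * (1 - Real.exp (s - t)) := by
      rw [mul_sub, ← Real.exp_add, add_sub_cancel, mul_one]
    _ < Real.exp t * (t - s) :=
      mul_lt_mul_of_pos_left (by linarith) (Real.exp_pos t)

theorem lt_of_mul_exp_le_mul_exp {a b s t : ℝ} (ha : 0 ≤ a) (hab : a < b)
    (h : b * Real.exp s ≤ a * Real.exp t) : s < t := by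
  contrapose! h
  calc
    a * Real.exp t ≤ a * Real.exp s := by gcongr
    _ < b * Real.exp s := by gcongr

namespace GammaSol

variable {n : ℕ} {β κ x1 ν η : ℝ}

theorem eq_mul_exp (h : GammaSol n β κ x1 ν η) : ν = κ / Real.sqrt n * Real.exp η := by
  obtain ⟨-, -, -, hlevel⟩ := h
  rw [← hlevel, mul_assoc, ← Real.exp_add, neg_add_cancel, Real.exp_zero, mul_one]

theorem mul_eq (h : GammaSol n β κ x1 ν η) :
    η * ν = β / Real.sqrt n * (Real.exp η - 1) - x1 := by
  obtain ⟨-, -, hbalance, -⟩ := h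
  have hexp : Real.exp (-η) * Real.exp η = 1 := by
    rw [← Real.exp_add, neg_add_cancel, Real.exp_zero]
  linear_combination Real.exp η * hbalance - (x1 + β / Real.sqrt n + η * ν) * hexp

theorem level_pos_of_lt (h : GammaSol n β κ x1 ν η) (hν : κ / Real.sqrt n < ν) :
    0 < κ / Real.sqrt n := by
  have hexp : 1 ≤ Real.exp η := Real.one_le_exp h.2.1
  contrapose! hν
  calc
    ν = κ / Real.sqrt n * Real.exp η := h.eq_mul_exp
    _ ≤ κ / Real.sqrt n := mul_le_of_one_le_right hν hexp

theorem level_mul_exp_sub_exp_lt {κ1 κ2 ν1 ν2 η1 η2 : ℝ}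
    (h1 : GammaSol n β κ1 x1 ν1 η1) (h2 : GammaSol n β κ2 x1 ν2 η2)
    (hκ1 : 0 < κ1 / Real.sqrt n) (hη : η2 ≠ η1) (hν : ν2 ≤ ν1) :
    κ1 / Real.sqrt n * (Real.exp η1 - Real.exp η2) <
      β / Real.sqrt n * (Real.exp η1 - Real.exp η2) :=
  calc
    _ < κ1 / Real.sqrt n * (Real.exp η1 * (η1 - η2)) :=
      mul_lt_mul_of_pos_left (exp_sub_exp_lt_exp_mul_sub hη) hκ1
    _ = η1 * ν1 - η2 * ν1 := by rw [h1.eq_mul_exp]; ring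
    _ ≤ η1 * ν1 - η2 * ν2 := sub_le_sub_left (mul_le_mul_of_nonneg_left hν h2.2.1) _
    _ = β / Real.sqrt n * (Real.exp η1 - Real.exp η2) := by rw [h1.mul_eq, h2.mul_eq]; ring

end GammaSol

theorem stmt9_general {n : ℕ} (hn : 1 ≤ n) {β κ1 κ2 x1 ν1 ν2 η1 η2 : ℝ} (hβ : β ≤ κ1)
    (hκ : κ1 < κ2) (h1 : GammaSol n β κ1 x1 ν1 η1) (h2 : GammaSol n β κ2 x1 ν2 η2) :
    ν1 < ν2 := by
  have hsqrt : 0 < Real.sqrt n := Real.sqrt_pos.mpr (by exact_mod_cast hn)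
  have hlevel : κ1 / Real.sqrt n < κ2 / Real.sqrt n := div_lt_div_of_pos_right hκ hsqrt
  by_contra! hν
  have hpos : 0 < κ1 / Real.sqrt n := h1.level_pos_of_lt (hlevel.trans_le (h2.1.trans hν))
  have hη : η2 < η1 :=
    lt_of_mul_exp_le_mul_exp hpos.le hlevel (by rwa [← h1.eq_mul_exp, ← h2.eq_mul_exp])
  have hβκ : κ1 / Real.sqrt n < β / Real.sqrt n :=
    lt_of_mul_lt_mul_right (h1.level_mul_exp_sub_exp_lt h2 hpos hη.ne hν)
      (sub_nonneg.mpr (Real.exp_le_exp.mpr hη.le))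
  exact hβκ.not_ge (div_le_div_of_nonneg_right hβ hsqrt.le)

/-- Lemma `tau`, part 3.  Fix `β < κ₁ < κ₂` and let `ν*_{κ₁}`, `ν*_{κ₂}`
parametrize the curves `Γ^{(κ₁)}`, `Γ^{(κ₂)}`.  If `x ∈ Ω` satisfies `x ≥ Γ^{(κ₂)}`
(i.e. `x₂ ≥ ν*_{κ₂}(x₁)`) then `x > Γ^{(κ₁)}` (i.e. `x₂ > ν*_{κ₁}(x₁)`): the curve
`Γ^{(κ₂)}` lies strictly above `Γ^{(κ₁)}`. -/
theorem stmt9 (n : ℕ) (hn : 1 ≤ n) (β κ1 κ2 : ℝ) (hβ : 0 < β)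
    (hκ1 : β < κ1) (hκ12 : κ1 < κ2)
    (νs1 νs2 : ℝ → ℝ)
    (hνs1 : ∀ x1 ≤ (0 : ℝ), ∃ η : ℝ, GammaSol n β κ1 x1 (νs1 x1) η)
    (hνs2 : ∀ x1 ≤ (0 : ℝ), ∃ η : ℝ, GammaSol n β κ2 x1 (νs2 x1) η) :
    ∀ x1 ≤ (0 : ℝ), ∀ x2 : ℝ, 0 ≤ x2 → νs2 x1 ≤ x2 → νs1 x1 < x2 :=
  fun x1 hx1 _ _ hx2 =>
    (stmt9_general hn hκ1.le hκ12 (hνs1 x1 hx1).choose_spec (hνs2 x1 hx1).choose_spec).trans_le hx2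
end
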